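/- For every t ∈ ℕ, the element z_t = Σ_{s=0}^{t} b_{t−s}·a_s of ⊕_{j∈ℕ} Y·a_j satisfies D(z_t) = 0, and z_t has additive order exactly p^{t+1} (that is, p^{t+1}·z_t = 0 but p^t·z_t ≠ 0). -/

import Mathlib

/-!
The relations `p·b_0 = 0` and `p·b_{j+1} = v·b_j` hold in `Y`, so `D z_t` telescopes to zero and
`p^{j+1}·b_j = 0` by induction on `j`, whence `p^{t+1}` kills every coefficient of `z_t`.

For the lower bound on the order it is enough that the coefficient `p^t·b_t` of `a_0` in `p^t·z_t`
is nonzero. The assignment `b_j ↦ v^j / p^{j+1}` maps `Y` to `ℚ_p[v] / ℤ_p[v]`, detecting it; after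
scaling by `p^{t+1}` and truncating at `v^{t+1}`, this becomes the integral assignment
`b_j ↦ p^{t-j}·v^j`, which respects the relations modulo the ideal `(p^{t+1}, v^{t+1})`
(`span_rel_le`). It sends `p^t·b_t` to `p^t·v^t`, which is not in that ideal
(`pow_mul_X_pow_notMem`).
-/

noncomputable section

/-- `R = ℤ_p[v]`, the polynomial ring over the `p`-adic integers. -/
abbrev R (p : ℕ) [Fact p.Prime] : Type := Polynomial (PadicInt p)

/-- `F = ⊕_{j ∈ ℕ} R·b_j`, the free `R`-module on generators `b_j = single j 1`. -/
abbrev F (p : ℕ) [Fact p.Prime] : Type := ℕ →₀ R p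

/-- The relations `p·b_0` and `p·b_j - v·b_{j-1}` for `j ≥ 1`. -/
def rel (p : ℕ) [Fact p.Prime] : ℕ → F p
  | 0 => Finsupp.single 0 (p : R p)
  | (j + 1) => Finsupp.single (j + 1) (p : R p) - Finsupp.single j (Polynomial.X : R p)

/-- `Y`, the quotient of `F` by the submodule generated by the relations. -/
abbrev Y (p : ℕ) [Fact p.Prime] : Type :=
  F p ⧸ Submodule.span (R p) (Set.range (rel p))

/-- The image of the generator `b_j` in `Y`. -/
def bY (p : ℕ) [Fact p.Prime] (j : ℕ) : Y p :=
  Submodule.Quotient.mk (Finsupp.single j (1 : R p))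

/-- The `R`-linear map `D : ⊕_j Y·a_j → ⊕_j Y·b_j` obtained by tensoring the resolution
differential with `Y`: `D(y·a_0) = (p·y)·b_0` and `D(y·a_j) = (p·y)·b_j - (v·y)·b_{j-1}`
for `j ≥ 1`. -/
def Dmap (p : ℕ) [Fact p.Prime] : (ℕ →₀ Y p) →ₗ[R p] (ℕ →₀ Y p) :=
  Finsupp.lsum ℕ fun j =>
    match j with
    | 0 => Finsupp.lsingle 0 ∘ₗ LinearMap.lsmul (R p) (Y p) (p : R p)
    | (j + 1) =>
        Finsupp.lsingle (j + 1) ∘ₗ LinearMap.lsmul (R p) (Y p) (p : R p)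
          - Finsupp.lsingle j ∘ₗ LinearMap.lsmul (R p) (Y p) (Polynomial.X : R p)

/-- The element `z_t = Σ_{s=0}^{t} b_{t-s}·a_s` of `⊕_j Y·a_j`. -/
def z (p : ℕ) [Fact p.Prime] (t : ℕ) : ℕ →₀ Y p :=
  ∑ s ∈ Finset.range (t + 1), Finsupp.single s (bY p (t - s))

theorem p_smul_bY_zero (p : ℕ) [Fact p.Prime] : (p : R p) • bY p 0 = 0 := by
  rw [bY, ← Submodule.Quotient.mk_smul, Submodule.Quotient.mk_eq_zero]
  refine Submodule.subset_span ⟨0, ?_⟩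
  simp [rel]

theorem p_smul_bY_succ (p : ℕ) [Fact p.Prime] (j : ℕ) :
    (p : R p) • bY p (j + 1) = (Polynomial.X : R p) • bY p j := by
  rw [bY, bY, ← Submodule.Quotient.mk_smul, ← Submodule.Quotient.mk_smul,
    Submodule.Quotient.eq]
  refine Submodule.subset_span ⟨j + 1, ?_⟩
  simp [rel]

theorem pow_smul_bY (p : ℕ) [Fact p.Prime] (j : ℕ) :
    (p : R p) ^ (j + 1) • bY p j = 0 := by
  induction j with
  | zero => simpa using p_smul_bY_zero p
  | succ j ih => rw [pow_succ, mul_smul, p_smul_bY_succ, smul_comm, ih, smul_zero]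

theorem Dmap_single_zero (p : ℕ) [Fact p.Prime] (y : Y p) :
    Dmap p (Finsupp.single 0 y) = Finsupp.single 0 ((p : R p) • y) := by
  rw [Dmap, Finsupp.lsum_single]
  rfl

theorem Dmap_single_succ (p : ℕ) [Fact p.Prime] (j : ℕ) (y : Y p) :
    Dmap p (Finsupp.single (j + 1) y) =
      Finsupp.single (j + 1) ((p : R p) • y) - Finsupp.single j ((Polynomial.X : R p) • y) := by
  rw [Dmap, Finsupp.lsum_single]
  rfl

/-- The partial sums of `D z_t` telescope: after the terms `s ≤ n`, only the `b_n`-component of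
the last term survives. -/
theorem Dmap_partial_sum (p : ℕ) [Fact p.Prime] (t n : ℕ) (hn : n ≤ t) :
    Dmap p (∑ s ∈ Finset.range (n + 1), Finsupp.single s (bY p (t - s))) =
      Finsupp.single n ((p : R p) • bY p (t - n)) := by
  induction n with
  | zero => simp [Dmap_single_zero]
  | succ n ih =>
    rw [Finset.sum_range_succ, map_add, ih (by omega), Dmap_single_succ,
      show t - n = t - (n + 1) + 1 by omega, p_smul_bY_succ]
    abel

/-- The map `F → R` with `b_j ↦ p^{t-j}·v^j`. For `j > t` the exponent `t - j` truncates to `0`,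
which is harmless because `v^j` then lies in the ideal `(p^{t+1}, v^{t+1})`. -/
def detect (p : ℕ) [Fact p.Prime] (t : ℕ) : F p →ₗ[R p] R p :=
  Finsupp.linearCombination (R p) fun j => (p : R p) ^ (t - j) * Polynomial.X ^ j

theorem span_rel_le (p : ℕ) [Fact p.Prime] (t : ℕ) :
    Submodule.span (R p) (Set.range (rel p)) ≤
      Submodule.comap (detect p t)
        (Ideal.span {(p : R p) ^ (t + 1), (Polynomial.X : R p) ^ (t + 1)}) := by
  rw [Submodule.span_le]
  rintro _ ⟨j, rfl⟩
  rw [SetLike.mem_coe, Submodule.mem_comap, Ideal.mem_span_pair]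
  cases j with
  | zero =>
    refine ⟨1, 0, ?_⟩
    simp only [rel, detect, Finsupp.linearCombination_single, smul_eq_mul, Nat.sub_zero]
    ring
  | succ j =>
    simp only [rel, detect, map_sub, Finsupp.linearCombination_single, smul_eq_mul]
    rcases Nat.lt_or_ge j t with h | h
    · refine ⟨0, 0, ?_⟩
      rw [show t - j = t - (j + 1) + 1 by omega]
      ring
    · obtain ⟨k, rfl⟩ := Nat.exists_eq_add_of_le h
      refine ⟨0, ((p : R p) - 1) * Polynomial.X ^ k, ?_⟩
      rw [show t - (t + k + 1) = 0 by omega, show t - (t + k) = 0 by omega]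
      ring

theorem pow_mul_X_pow_notMem (p : ℕ) [Fact p.Prime] (t : ℕ) :
    (p : R p) ^ t * Polynomial.X ^ t ∉
      Ideal.span {(p : R p) ^ (t + 1), (Polynomial.X : R p) ^ (t + 1)} := by
  rw [Ideal.mem_span_pair]
  rintro ⟨a, b, h⟩
  -- Comparing coefficients of `v^t` gives `a_t * p^(t+1) = p^t`, so `p` would be a unit of `ℤ_p`.
  have hc := congrArg (fun f => Polynomial.coeff f t) h
  have hp (n : ℕ) : (p : R p) ^ n = Polynomial.C ((p : PadicInt p) ^ n) := by simp
  simp only [hp, Polynomial.coeff_add, Polynomial.coeff_mul_C,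
    Polynomial.coeff_mul_X_pow', le_refl, if_true, Nat.sub_self, Polynomial.coeff_C_zero,
    show ¬ t + 1 ≤ t by omega, if_false, add_zero] at hc
  have hp0 : (p : PadicInt p) ^ t ≠ 0 := pow_ne_zero _ PadicInt.prime_p.ne_zero
  refine PadicInt.prime_p.not_isUnit (IsUnit.of_mul_eq_one (a.coeff t) (mul_left_cancel₀ hp0 ?_))
  linear_combination hc

theorem pow_smul_bY_ne_zero (p : ℕ) [Fact p.Prime] (t : ℕ) :
    (p : R p) ^ t • bY p t ≠ 0 := by
  rw [bY, ← Submodule.Quotient.mk_smul, Ne, Submodule.Quotient.mk_eq_zero]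
  intro h
  refine pow_mul_X_pow_notMem p t ?_
  simpa [detect] using span_rel_le p t h

/-- each `z_t` lies in the kernel of `D` and has additive order
exactly `p^(t+1)`. -/
theorem stmt_7 (p : ℕ) [Fact p.Prime] (t : ℕ) :
    Dmap p (z p t) = 0 ∧ p ^ (t + 1) • z p t = 0 ∧ p ^ t • z p t ≠ 0 := by
  -- The statement uses the additive `ℕ`-action; the lemmas use the action of `p ∈ R`.
  have hsmul (n : ℕ) (y : Y p) : p ^ n • y = (p : R p) ^ n • y := by
    rw [← Nat.cast_smul_eq_nsmul (R p), Nat.cast_pow]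
  refine ⟨?_, ?_, fun h => ?_⟩
  · rw [z, Dmap_partial_sum p t t le_rfl, Nat.sub_self, p_smul_bY_zero, Finsupp.single_zero]
  · rw [z, Finset.smul_sum]
    refine Finset.sum_eq_zero fun s hs => ?_
    rw [Finsupp.smul_single, hsmul, show t + 1 = s + (t - s + 1) by
      have := Finset.mem_range.mp hs
      omega, pow_add, mul_smul, pow_smul_bY, smul_zero, Finsupp.single_zero]
  · refine pow_smul_bY_ne_zero p t ?_
    have h0 := DFunLike.congr_fun h 0
    rw [Finsupp.smul_apply, hsmul] at h0
    simpa [z, Finsupp.finsetSum_apply, Finsupp.single_apply] using h0
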